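/- Let d ≥ 1, let Ω be a bounded open subset of ℝ^d, and let X be a reflexive real Banach space with a normalized 1-symmetric basis (e_n). Then the formal identity I : L¹(Ω) → JF_X(Ω) is strictly singular: for every infinite-dimensional closed linear subspace Z of L¹(Ω) one has inf{ ‖f‖_{JF_X(Ω)} : f ∈ Z, ‖f‖_{L¹} = 1 } = 0, i.e. the norms ‖·‖_{L¹} and ‖·‖_{JF_X(Ω)} are not equivalent on Z. -/

import Mathlib

/-!
The proof separates into a statement on `X` and a statement on `L¹`.

*Flat vectors are small in `X`* (`IsSymmetricBasis.exists_flat_small`). If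
`‖e_0 + ⋯ + e_{m-1}‖ ≥ c m` held for all `m ≥ 1`, averaging over cyclic shifts would give
`‖∑ a_n e_n‖ ≥ c ∑ |a_n|`. By reflexivity `(e_n)` has a weak cluster point `x`. It is close to
some `y` in the span of `e_0, …, e_{m-1}`, and, by Hahn–Banach, also close to a combination of
the `e_n` whose coefficients of index at least `m` sum to `1`. The lower `ℓ¹`-estimate forbids
this, so `‖e_0 + ⋯ + e_{m-1}‖ / m` takes arbitrarily small values. If this quotient is at most `c`
and `g` is a functional of norm at most one, fewer than `m` of the values `|g(e_n)|` exceed `c`;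
hence `‖∑ a_n e_n‖ ≤ c + m δ` whenever `∑ |a_n| ≤ 1` and `|a_n| ≤ δ` for all `n`.

It therefore suffices to find, in an infinite-dimensional subspace `Z` of `L¹(μ)` and for each
`δ > 0`, a norm-one `f` with `|∫_T f| ≤ δ` for all boxes `T` (`exists_unit_small_on_boxes`).
The tool is a bracketing bound (`exists_box_cover_density`): for a nonnegative density `M` of mass
at most `C`, every box is within `M`-mass `ε` of one of `n` sets `Q_k`, where `n` depends only on
the dimension, `C` and `ε`. There are two cases.

* The unit ball of `Z` is almost order bounded: for each `η` there is an integrable `M ≥ 0` with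
  `∫ (|f| - M)⁺ ≤ η` for all `f` in it. A norm-one `f ∈ Z` whose integrals over the finitely many
  sets `Q_k` vanish exists by linear algebra, and its integral over any box is at most `2 η`.
* Otherwise there are `η > 0` and, for each `N`, elements `f_1, …, f_N` in the unit ball of `Z`
  with `∫ max_i |f_i| ≥ N η`. The average of `‖∑ ε_i f_i‖` over all signs is then at least `N η`.
  These sums are dominated by `∑ |f_i|`, so up to a small multiple of `N` box integrals are bounded
  by those over `n` sets `Q_k`, with `n` independent of `N`; by orthogonality of the signs
  these are at most `√N` on average. For large `N` some choice of signs gives box integrals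
  that are small compared with the norm.
-/

open MeasureTheory

noncomputable section

/-- `e` is a normalized 1-symmetric (Schauder) basis of `X`: each `e n` has norm one,
its linear span is dense, and the norm of finite linear combinations is invariant under
permutations of the indices and changes of signs of the coefficients. -/
def IsSymmetricBasis {X : Type*} [NormedAddCommGroup X] [NormedSpace ℝ X] (e : ℕ → X) : Prop :=
  (∀ n, ‖e n‖ = 1) ∧
  Dense (Submodule.span ℝ (Set.range e) : Set X) ∧
  ∀ (a : ℕ →₀ ℝ) (π : Equiv.Perm ℕ) (ε : ℕ → ℝ), (∀ n, ε n = 1 ∨ ε n = -1) →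
    ‖a.sum fun n c => (ε n * c) • e (π n)‖ = ‖a.sum fun n c => c • e n‖

/-- An open parallelepiped in `ℝ^d`, i.e. a product of open intervals. -/
def IsOpenParallelepiped {d : ℕ} (T : Set (Fin d → ℝ)) : Prop :=
  ∃ a b : Fin d → ℝ, (∀ i, a i < b i) ∧ T = Set.pi Set.univ fun i => Set.Ioo (a i) (b i)

/-- The `JF_X(Ω)` norm of an integrable function on `Ω ⊆ ℝ^d`: the supremum of
`‖Σ_j (∫_{T_j} f dμ) e_j‖_X` over all finite families of pairwise disjoint open
parallelepipeds contained in `Ω`. -/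
def JFNorm {X : Type*} [NormedAddCommGroup X] [NormedSpace ℝ X] {d : ℕ}
    (e : ℕ → X) (Ω : Set (Fin d → ℝ)) (f : (Fin d → ℝ) → ℝ) : ℝ :=
  sSup { r | ∃ (m : ℕ) (T : Fin m → Set (Fin d → ℝ)),
    (∀ j, IsOpenParallelepiped (T j) ∧ T j ⊆ Ω) ∧
    (Pairwise fun i j => Disjoint (T i) (T j)) ∧
    r = ‖∑ j : Fin m, (∫ x in T j, f x) • e (j : ℕ)‖ }

/-! ### Approximating boxes by finitely many sets -/

/-- A bounded function on `ℝ` is approximated within `s` by its values at finitely many points,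
whose number depends only on the bound and on `s`. -/
theorem exists_finite_approx (C s : ℝ) (hs : 0 < s) (F : ℝ → ℝ) (hF0 : ∀ t, 0 ≤ F t)
    (hFC : ∀ t, F t ≤ C) :
    ∃ t : Fin (⌊C / s⌋₊ + 1) → ℝ, ∀ a, ∃ k, |F a - F (t k)| ≤ s := by
  -- `t k` is a point whose value lies in `[k s, (k + 1) s)`, if there is one
  have key : ∀ k : Fin (⌊C / s⌋₊ + 1), ∃ t : ℝ, ∀ a, ⌊F a / s⌋₊ = k → ⌊F t / s⌋₊ = k := by
    intro k
    by_cases h : ∃ a, ⌊F a / s⌋₊ = k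
    · exact ⟨h.choose, fun _ _ => h.choose_spec⟩
    · exact ⟨0, fun a ha => absurd ⟨a, ha⟩ h⟩
  choose t ht using key
  refine ⟨t, fun a => ?_⟩
  have hk : ⌊F a / s⌋₊ < ⌊C / s⌋₊ + 1 :=
    Nat.lt_succ_of_le (Nat.floor_le_floor (div_le_div_of_nonneg_right (hFC a) hs.le))
  refine ⟨⟨_, hk⟩, ?_⟩
  have h1 := ht ⟨_, hk⟩ a rfl
  simp only at h1
  set t' := t ⟨_, hk⟩
  have a1 := Nat.floor_le (div_nonneg (hF0 a) hs.le)
  have a2 := Nat.lt_floor_add_one (F a / s)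
  have b1 := Nat.floor_le (div_nonneg (hF0 t') hs.le)
  have b2 := Nat.lt_floor_add_one (F t' / s)
  rw [h1] at b1 b2
  rw [le_div_iff₀ hs] at a1 b1
  rw [div_lt_iff₀ hs] at a2 b2
  rw [abs_le]
  constructor <;> nlinarith

theorem measureReal_strip {d : ℕ} (ν : Measure (Fin d → ℝ)) [IsFiniteMeasure ν] (i : Fin d)
    (a t : ℝ) :
    ν.real {x | x i ∈ Set.uIoc a t} = |ν.real {x | x i ≤ a} - ν.real {x | x i ≤ t}| := by
  have key : ∀ a t : ℝ, a ≤ t → ν.real {x : Fin d → ℝ | x i ∈ Set.Ioc a t}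
      = ν.real {x | x i ≤ t} - ν.real {x | x i ≤ a} := by
    intro a t hat
    rw [← measureReal_sdiff]
    · congr 1
      ext x
      simp [and_comm]
    · intro x hx
      exact le_trans hx hat
    · exact measurableSet_le (measurable_pi_apply i) measurable_const
  rcases le_total a t with h | h
  · rw [Set.uIoc_of_le h, key a t h, abs_sub_comm, abs_of_nonneg]
    rw [← key a t h]; positivity
  · rw [Set.uIoc_of_ge h, key t a h, abs_of_nonneg]
    rw [← key t a h]; positivity

/-- Up to sets of measure `ε`, the half-open boxes are finitely many sets, whose number depends
on `ν` only through a bound for its total mass. -/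
theorem exists_box_cover (d : ℕ) (C ε : ℝ) (hε : 0 < ε) :
    ∃ n : ℕ, ∀ (ν : Measure (Fin d → ℝ)) [IsFiniteMeasure ν], ν.real Set.univ ≤ C →
      ∃ Q : Fin n → Set (Fin d → ℝ), (∀ k, MeasurableSet (Q k)) ∧
        ∀ a b : Fin d → ℝ, ∃ k,
          ν.real (symmDiff (Set.pi Set.univ fun i => Set.Ioc (a i) (b i)) (Q k)) ≤ ε := by
  set s : ℝ := ε / (2 * d + 1) with hs_def
  have hs : 0 < s := by positivity
  set K := ⌊C / s⌋₊ + 1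
  let ι := Fin d → Fin K × Fin K
  refine ⟨Fintype.card ι, fun ν _ hν => ?_⟩
  have h1 : ∀ i : Fin d, ∃ t : Fin K → ℝ, ∀ a, ∃ k,
      |ν.real {x | x i ≤ a} - ν.real {x | x i ≤ t k}| ≤ s := fun i =>
    exists_finite_approx C s hs (fun a => ν.real {x : Fin d → ℝ | x i ≤ a})
      (fun _ => measureReal_nonneg)
      (fun _ => (measureReal_mono (Set.subset_univ _)).trans hν)
  choose t ht using h1
  let Q : ι → Set (Fin d → ℝ) := fun κ =>
    Set.pi Set.univ fun i => Set.Ioc (t i (κ i).1) (t i (κ i).2)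
  refine ⟨fun k => Q ((Fintype.equivFin ι).symm k),
    fun k => MeasurableSet.univ_pi fun i => measurableSet_Ioc, fun a b => ?_⟩
  choose k hk using ht
  refine ⟨Fintype.equivFin ι (fun i => (k i (a i), k i (b i))), ?_⟩
  beta_reduce
  rw [Equiv.symm_apply_apply]
  -- the two boxes differ only in the strips between corresponding faces
  have hsub : symmDiff (Set.pi Set.univ fun i => Set.Ioc (a i) (b i))
      (Q fun i => (k i (a i), k i (b i))) ⊆
      ⋃ i : Fin d, ({x | x i ∈ Set.uIoc (a i) (t i (k i (a i)))} ∪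
        {x | x i ∈ Set.uIoc (b i) (t i (k i (b i)))}) := by
    intro x hx
    by_contra hcon
    simp only [Set.mem_iUnion, Set.mem_union, Set.mem_ofPred_eq, not_exists, not_or,
      Set.mem_uIoc, not_and, not_le] at hcon
    have : ∀ i, x i ∈ Set.Ioc (a i) (b i) ↔
        x i ∈ Set.Ioc (t i (k i (a i))) (t i (k i (b i))) := by
      intro i
      obtain ⟨⟨p1, p2⟩, ⟨p3, p4⟩⟩ := hcon i
      constructor
      · rintro ⟨h1, h2⟩
        exact ⟨by_contra fun h => absurd (p1 h1) (not_lt.2 (not_lt.1 h)),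
          by_contra fun h => absurd (p4 (not_le.1 h)) (not_lt.2 h2)⟩
      · rintro ⟨h1, h2⟩
        exact ⟨by_contra fun h => absurd (p2 h1) (not_lt.2 (not_lt.1 h)),
          by_contra fun h => absurd (p3 (not_le.1 h)) (not_lt.2 h2)⟩
    have h2 : x ∈ (Set.pi Set.univ fun i => Set.Ioc (a i) (b i)) ↔
        x ∈ Q fun i => (k i (a i), k i (b i)) := by
      simp only [Q, Set.mem_univ_pi]
      exact forall_congr' this
    rw [Set.mem_symmDiff] at hx
    tauto
  calc _ ≤ _ := measureReal_mono hsub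
    _ ≤ ∑ i : Fin d, ν.real ({x | x i ∈ Set.uIoc (a i) (t i (k i (a i)))} ∪
        {x | x i ∈ Set.uIoc (b i) (t i (k i (b i)))}) := measureReal_iUnion_fintype_le _
    _ ≤ ∑ i : Fin d, (s + s) := by
        refine Finset.sum_le_sum fun i _ => (measureReal_union_le _ _).trans ?_
        rw [measureReal_strip, measureReal_strip]
        exact add_le_add (hk i _) (hk i _)
    _ ≤ ε := by
        have : s * (2 * d + 1) = ε := by rw [hs_def]; field_simp
        simp; nlinarith

/-- The approximation of boxes for the measure with density `M`. The number `n` is chosen before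
`μ` and `M`. -/
theorem exists_box_cover_density (d : ℕ) (C ε : ℝ) (hε : 0 < ε) :
    ∃ n : ℕ, ∀ (μ : Measure (Fin d → ℝ)) (M : (Fin d → ℝ) → ℝ), Integrable M μ →
      (∀ x, 0 ≤ M x) → ∫ x, M x ∂μ ≤ C →
      ∃ Q : Fin n → Set (Fin d → ℝ), (∀ k, MeasurableSet (Q k)) ∧
        ∀ a b : Fin d → ℝ, ∃ k,
          ∫ x in symmDiff (Set.pi Set.univ fun i => Set.Ioc (a i) (b i)) (Q k), M x ∂μ ≤ ε := by
  obtain ⟨n, hn⟩ := exists_box_cover d C ε hε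
  refine ⟨n, fun μ M hM hM0 hMC => ?_⟩
  let ν := μ.withDensity fun x => ENNReal.ofReal (M x)
  have : IsFiniteMeasure ν := isFiniteMeasure_withDensity_ofReal hM.2
  have hν : ∀ A, MeasurableSet A → ν.real A = ∫ x in A, M x ∂μ := by
    intro A hA
    rw [Measure.real, withDensity_apply _ hA, ← ofReal_integral_eq_lintegral_ofReal hM.integrableOn
      (Filter.Eventually.of_forall hM0), ENNReal.toReal_ofReal]
    exact integral_nonneg hM0
  obtain ⟨Q, hQ, h⟩ := hn ν (by rw [hν _ MeasurableSet.univ]; simpa using hMC)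
  refine ⟨Q, hQ, fun a b => ?_⟩
  obtain ⟨k, hk⟩ := h a b
  refine ⟨k, ?_⟩
  rwa [← hν]
  exact (MeasurableSet.univ_pi fun i => measurableSet_Ioc).symmDiff (hQ k)

theorem abs_setIntegral_sub_le {α : Type*} [MeasurableSpace α] {μ : Measure α} {f : α → ℝ}
    (hf : Integrable f μ) {T Q : Set α} (hT : MeasurableSet T) (hQ : MeasurableSet Q) :
    |∫ x in T, f x ∂μ - ∫ x in Q, f x ∂μ| ≤ ∫ x in symmDiff T Q, |f x| ∂μ := by
  rw [← integral_indicator hT, ← integral_indicator hQ, ← integral_indicator (hT.symmDiff hQ),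
    ← integral_sub (hf.indicator hT) (hf.indicator hQ)]
  refine (abs_integral_le_integral_abs).trans (integral_mono ?_ ?_ ?_)
  · exact ((hf.indicator hT).sub (hf.indicator hQ)).abs
  · exact hf.abs.indicator (hT.symmDiff hQ)
  · intro x
    by_cases h1 : x ∈ T <;> by_cases h2 : x ∈ Q <;> simp [h1, h2, Set.mem_symmDiff]

/-! ### Averages over signs -/

theorem sum_sign_mul {N : ℕ} (i j : Fin N) :
    ∑ ε : Fin N → ℤˣ, ((ε i : ℤ) : ℝ) * ((ε j : ℤ) : ℝ)
      = if i = j then (2 : ℝ) ^ N else 0 := by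
  split_ifs with h
  · subst h
    have : ∀ u : ℤˣ, (((u : ℤˣ) : ℤ) : ℝ) * (((u : ℤˣ) : ℤ) : ℝ) = 1 := by
      intro u; rcases Int.units_eq_one_or u with h | h <;> simp [h]
    simp [this]
  · have := Fintype.sum_equiv (Equiv.mulLeft (Pi.mulSingle i (-1) : Fin N → ℤˣ))
      (fun ε : Fin N → ℤˣ => -(((ε i : ℤ) : ℝ) * ((ε j : ℤ) : ℝ)))
      (fun ε : Fin N → ℤˣ => ((ε i : ℤ) : ℝ) * ((ε j : ℤ) : ℝ))
      (by intro ε; simp [Pi.mulSingle_eq_of_ne (Ne.symm h)])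
    rw [Finset.sum_neg_distrib] at this
    linarith

/-- The average over all signs of `|∑ ε_i a_i|` is at least `max |a_j|`. -/
theorem le_sum_abs_sign_sum {N : ℕ} (a : Fin N → ℝ) (j : Fin N) :
    2 ^ N * |a j| ≤ ∑ ε : Fin N → ℤˣ, |∑ i, ((ε i : ℤ) : ℝ) * a i| := by
  have h1 : ∑ ε : Fin N → ℤˣ, ((ε j : ℤ) : ℝ) * ∑ i, ((ε i : ℤ) : ℝ) * a i
      = 2 ^ N * a j := by
    simp_rw [Finset.mul_sum]
    rw [Finset.sum_comm]
    simp_rw [← mul_assoc, ← Finset.sum_mul, sum_sign_mul]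
    simp
  have h2 : 2 ^ N * |a j| = |2 ^ N * a j| := by
    rw [abs_mul, abs_of_pos (show (0 : ℝ) < 2 ^ N by positivity)]
  rw [h2, ← h1]
  refine (Finset.abs_sum_le_sum_abs _ _).trans (Finset.sum_le_sum fun ε _ => ?_)
  rw [abs_mul]
  rcases Int.units_eq_one_or (ε j) with h | h <;> simp [h]

/-- The average over all signs of `|∑ ε_i a_i|` is at most `√N` if all `|a_i| ≤ 1`. -/
theorem sum_abs_sign_sum_le {N : ℕ} (a : Fin N → ℝ) (ha : ∀ i, |a i| ≤ 1) :
    ∑ ε : Fin N → ℤˣ, |∑ i, ((ε i : ℤ) : ℝ) * a i| ≤ 2 ^ N * √N := by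
  have h1 : ∑ ε : Fin N → ℤˣ, (∑ i, ((ε i : ℤ) : ℝ) * a i) ^ 2 
      = 2 ^ N * ∑ i, a i ^ 2 := by
    have : ∀ ε : Fin N → ℤˣ, (∑ i, ((ε i : ℤ) : ℝ) * a i) ^ 2 =
        ∑ i, ∑ j, ((ε i : ℤ) : ℝ) * ((ε j : ℤ) : ℝ) * (a i * a j) := by
      intro ε
      rw [sq, Finset.sum_mul_sum]
      refine Finset.sum_congr rfl fun i _ => Finset.sum_congr rfl fun j _ => by ring
    simp_rw [this]
    rw [Finset.sum_comm, Finset.mul_sum]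
    refine Finset.sum_congr rfl fun i _ => ?_
    rw [Finset.sum_comm]
    simp_rw [← Finset.sum_mul, sum_sign_mul]
    simp [sq]
  have h2 := sq_sum_le_card_mul_sum_sq (s := Finset.univ)
    (f := fun ε : Fin N → ℤˣ => |∑ i, ((ε i : ℤ) : ℝ) * a i|)
  simp only [sq_abs, h1] at h2
  have h3 : ∑ i, a i ^ 2 ≤ N := by
    calc ∑ i, a i ^ 2 ≤ ∑ i : Fin N, (1 : ℝ) :=
          Finset.sum_le_sum fun i _ => (sq_le_one_iff_abs_le_one _).2 (ha i)
      _ = N := by simp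
  refine le_of_sq_le_sq ?_ (by positivity)
  rw [mul_pow, Real.sq_sqrt (by positivity)]
  refine h2.trans ?_
  simp
  nlinarith [show (0 : ℝ) < 2 ^ N by positivity, mul_le_mul_of_nonneg_left h3 (show (0:ℝ) ≤ 2 ^ N * 2 ^ N by positivity)]

/-! ### Functions with small integrals over all boxes -/

section core
variable {d : ℕ} {μ : Measure (Fin d → ℝ)}

theorem abs_setIntegral_le_norm (f : Lp ℝ 1 μ) (T : Set (Fin d → ℝ)) :
    |∫ x in T, f x ∂μ| ≤ ‖f‖ := by
  rw [L1.norm_eq_integral_norm]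
  refine (abs_integral_le_integral_abs).trans ?_
  exact setIntegral_le_integral (L1.integrable_coeFn f).abs
    (Filter.Eventually.of_forall fun x => abs_nonneg _)

/-- The linear functional `f ↦ ∫_T f dμ` on `L¹(μ)`. -/
def intL (T : Set (Fin d → ℝ)) : Lp ℝ 1 μ →ₗ[ℝ] ℝ where
  toFun f := ∫ x in T, f x ∂μ
  map_add' f g := by
    rw [← integral_add (L1.integrable_coeFn f).integrableOn (L1.integrable_coeFn g).integrableOn]
    exact integral_congr_ae (ae_restrict_of_ae (Lp.coeFn_add f g))
  map_smul' c f := by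
    rw [RingHom.id_apply, smul_eq_mul, ← integral_const_mul]
    exact integral_congr_ae (ae_restrict_of_ae (Lp.coeFn_smul c f))

/-- The case of an almost order bounded unit ball. -/
theorem exists_small_of_dominated (Z : Submodule ℝ (Lp ℝ 1 μ)) (hZ : ¬ FiniteDimensional ℝ Z)
    (η : ℝ) (hη : 0 < η) (M : (Fin d → ℝ) → ℝ) (hM : Integrable M μ) (hM0 : ∀ x, 0 ≤ M x)
    (h : ∀ f ∈ Z, ‖f‖ ≤ 1 → ∫ x, max (|f x| - M x) 0 ∂μ ≤ η) :
    ∃ f ∈ Z, ‖f‖ = 1 ∧ ∀ a b : Fin d → ℝ,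
      |∫ x in Set.pi Set.univ (fun i => Set.Ioc (a i) (b i)), f x ∂μ| ≤ 2 * η := by
  obtain ⟨n, hn⟩ := exists_box_cover_density d (∫ x, M x ∂μ) η hη
  obtain ⟨Q, hQ, hc⟩ := hn μ M hM hM0 le_rfl
  let Φ : Z →ₗ[ℝ] (Fin n → ℝ) := (LinearMap.pi fun k => intL (Q k)) ∘ₗ Z.subtype
  have hΦ : ¬ Function.Injective Φ := fun hi => hZ (Module.Finite.of_injective Φ hi)
  rw [← LinearMap.ker_eq_bot, Submodule.eq_bot_iff] at hΦ
  push Not at hΦ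
  obtain ⟨g, hg, hg0⟩ := hΦ
  have hg0' : ‖(g : Lp ℝ 1 μ)‖ ≠ 0 := by simpa using hg0
  let f : Lp ℝ 1 μ := (‖(g : Lp ℝ 1 μ)‖⁻¹ • g : Z)
  have hfZ : f ∈ Z := Subtype.property _
  have hf1 : ‖f‖ = 1 := by
    simp only [f, Submodule.coe_smul, norm_smul, norm_inv, norm_norm]
    exact inv_mul_cancel₀ hg0'
  have hfQ : ∀ k, ∫ x in Q k, f x ∂μ = 0 := by
    intro k
    have h1 : Φ (‖(g : Lp ℝ 1 μ)‖⁻¹ • g) = 0 := by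
      rw [map_smul, LinearMap.mem_ker.1 hg, smul_zero]
    exact congrFun h1 k
  refine ⟨f, hfZ, hf1, fun a b => ?_⟩
  obtain ⟨k, hk⟩ := hc a b
  set T := Set.pi Set.univ fun i => Set.Ioc (a i) (b i)
  have hT : MeasurableSet T := MeasurableSet.univ_pi fun i => measurableSet_Ioc
  have hf := L1.integrable_coeFn f
  have h1 := abs_setIntegral_sub_le hf hT (hQ k)
  rw [hfQ k, sub_zero] at h1
  have hint : Integrable (fun x => max (|f x| - M x) 0) μ := (hf.abs.sub hM).pos_part
  calc _ ≤ _ := h1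
    _ ≤ ∫ x in symmDiff T (Q k), (M x + max (|f x| - M x) 0) ∂μ := by
        refine integral_mono hf.abs.integrableOn (hM.add hint).integrableOn fun x => ?_
        have := le_max_left (|f x| - M x) 0
        simp only
        linarith
    _ = ∫ x in symmDiff T (Q k), M x ∂μ + ∫ x in symmDiff T (Q k), max (|f x| - M x) 0 ∂μ :=
        integral_add hM.integrableOn hint.integrableOn
    _ ≤ η + η := by
        refine add_le_add hk ((setIntegral_le_integral hint
          (Filter.Eventually.of_forall fun x => le_max_right _ _)).trans (h f hfZ hf1.le))
    _ = 2 * η := by ring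

/-- If the unit ball of `Z` is not almost order bounded, it contains `f_1, …, f_N` whose maximal
function `M = max_i |f_i|` has integral at least `N η`. The last clause says `M ≤ max_i |f_i|`,
in a form that makes sense for `N = 0`. -/
theorem exists_large_max (Z : Submodule ℝ (Lp ℝ 1 μ)) (η : ℝ)
    (h : ∀ M : (Fin d → ℝ) → ℝ, Integrable M μ → (∀ x, 0 ≤ M x) →
      ∃ f ∈ Z, ‖f‖ ≤ 1 ∧ η ≤ ∫ x, max (|f x| - M x) 0 ∂μ) (N : ℕ) :
    ∃ (f : Fin N → Lp ℝ 1 μ) (M : (Fin d → ℝ) → ℝ), (∀ i, f i ∈ Z ∧ ‖f i‖ ≤ 1) ∧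
      Integrable M μ ∧ (∀ x, 0 ≤ M x) ∧ N * η ≤ ∫ x, M x ∂μ ∧
      ∀ x B, 0 ≤ B → (∀ i, |f i x| ≤ B) → M x ≤ B := by
  induction N with
  | zero =>
    refine ⟨fun i => i.elim0, 0, fun i => i.elim0, integrable_zero _ _ _, fun _ => le_rfl, ?_,
      fun x B hB _ => hB⟩
    simp
  | succ N ih =>
    obtain ⟨f, M, hf, hM, hM0, hMη, hB⟩ := ih
    obtain ⟨g, hg, hg1, hgη⟩ := h M hM hM0
    have hgi := L1.integrable_coeFn g
    -- `M + (|g| - M)⁺` is `max M |g|`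
    refine ⟨Fin.snoc f g, fun x => M x + max (|g x| - M x) 0, ?_, ?_, ?_, ?_, ?_⟩
    · intro i
      refine Fin.lastCases ?_ (fun i => ?_) i
      · simpa using ⟨hg, hg1⟩
      · simpa using hf i
    · exact hM.add (hgi.abs.sub hM).pos_part
    · intro x
      have := le_max_right (|g x| - M x) 0
      have := hM0 x
      linarith
    · have hpos : Integrable (fun x => max (|g x| - M x) 0) μ := (hgi.abs.sub hM).pos_part
      simp only
      rw [integral_add hM hpos]
      push_cast
      linarith
    · intro x B hB0 hBi
      have h1 : M x ≤ B := hB x B hB0 fun i => by simpa using hBi i.castSucc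
      have h2 : |g x| ≤ B := by simpa using hBi (Fin.last N)
      rcases max_cases (|g x| - M x) 0 with h | h <;> linarith

/-- The case of a unit ball that is not almost order bounded, before normalization of `f`; the
strict inequality for `B ≥ 0` forces `f ≠ 0`. -/
theorem exists_small_of_not_dominated (Z : Submodule ℝ (Lp ℝ 1 μ)) (η : ℝ) (hη : 0 < η)
    (h : ∀ M : (Fin d → ℝ) → ℝ, Integrable M μ → (∀ x, 0 ≤ M x) →
      ∃ f ∈ Z, ‖f‖ ≤ 1 ∧ η ≤ ∫ x, max (|f x| - M x) 0 ∂μ) (δ : ℝ) (hδ : 0 < δ) :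
    ∃ f ∈ Z, ∃ B : ℝ, B < δ * ‖f‖ ∧ ∀ a b : Fin d → ℝ,
      |∫ x in Set.pi Set.univ (fun i => Set.Ioc (a i) (b i)), f x ∂μ| ≤ B := by
  obtain ⟨n, hn⟩ := exists_box_cover_density d 1 (δ * η / 2) (by positivity)
  obtain ⟨N, hN0, hN⟩ : ∃ N : ℕ, 0 < (N : ℝ) ∧ n * √N < N * (δ * η / 2) := by
    obtain ⟨N, hN⟩ := exists_nat_gt ((n / (δ * η / 2)) ^ 2)
    have h0 : (0 : ℝ) < N := lt_of_le_of_lt (sq_nonneg _) hN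
    refine ⟨N, h0, ?_⟩
    have h1 : n / (δ * η / 2) < √N := Real.lt_sqrt_of_sq_lt hN
    rw [div_lt_iff₀ (by positivity)] at h1
    have h2 : √(N : ℝ) * √N = N := Real.mul_self_sqrt h0.le
    have h3 : 0 < √(N : ℝ) := Real.sqrt_pos.2 h0
    nlinarith
  obtain ⟨f, M, hf, hM, hM0, hMη, hMB⟩ := exists_large_max Z η h N
  -- `N W` dominates every signed sum of the `f i`, and `W` has mass at most one whatever `N` is
  let W : (Fin d → ℝ) → ℝ := fun x => (N : ℝ)⁻¹ * ∑ i, |f i x|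
  have hfi : ∀ i, Integrable (fun x => |f i x|) μ := fun i => (L1.integrable_coeFn (f i)).abs
  have hSi : Integrable (fun x => ∑ i, |f i x|) μ := integrable_finsetSum _ fun i _ => hfi i
  have hW1 : ∫ x, W x ∂μ ≤ 1 := by
    simp only [W]
    rw [integral_const_mul, integral_finsetSum _ fun i _ => hfi i, inv_mul_le_iff₀ hN0, mul_one]
    calc ∑ i, ∫ x, |f i x| ∂μ ≤ ∑ i : Fin N, (1 : ℝ) := by
          refine Finset.sum_le_sum fun i _ => ?_
          have := (hf i).2
          rwa [L1.norm_eq_integral_norm] at this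
      _ = N := by simp
  obtain ⟨Q, hQ, hc⟩ := hn μ W (hSi.const_mul _)
    (fun x => mul_nonneg (inv_nonneg.2 hN0.le) (Finset.sum_nonneg fun i _ => abs_nonneg _)) hW1
  let S : (Fin N → ℤˣ) → Lp ℝ 1 μ := fun ε => ∑ i, ((ε i : ℤ) : ℝ) • f i
  have hSZ : ∀ ε, S ε ∈ Z := fun ε => Z.sum_mem fun i _ => Z.smul_mem _ (hf i).1
  have hSx : ∀ ε, ∀ᵐ x ∂μ, S ε x = ∑ i, ((ε i : ℤ) : ℝ) * f i x := by
    intro ε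
    have h1 := Lp.coeFn_fun_finsetSum Finset.univ fun i => ((ε i : ℤ) : ℝ) • f i
    have h2 : ∀ᵐ x ∂μ, ∀ i, (((ε i : ℤ) : ℝ) • f i) x = ((ε i : ℤ) : ℝ) * f i x :=
      ae_all_iff.2 fun i => Lp.coeFn_smul _ _
    filter_upwards [h1, h2] with x h1 h2
    rw [h1]
    exact Finset.sum_congr rfl fun i _ => h2 i
  have hSQ : ∀ ε k, ∫ x in Q k, S ε x ∂μ = ∑ i, ((ε i : ℤ) : ℝ) * ∫ x in Q k, f i x ∂μ := by
    intro ε k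
    change intL (Q k) (S ε) = ∑ i, ((ε i : ℤ) : ℝ) * intL (Q k) (f i)
    simp [S]
  -- the averaged norm of the signed sums is at least `N η`
  have hlow : 2 ^ N * (N * η) ≤ ∑ ε, ‖S ε‖ := by
    calc 2 ^ N * (N * η) ≤ ∫ x, 2 ^ N * M x ∂μ := by
          rw [integral_const_mul]
          exact mul_le_mul_of_nonneg_left hMη (by positivity)
      _ ≤ ∫ x, ∑ ε, |S ε x| ∂μ := by
          refine integral_mono_ae (hM.const_mul _)
            (integrable_finsetSum _ fun ε _ => (L1.integrable_coeFn (S ε)).abs) ?_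
          filter_upwards [ae_all_iff.2 hSx] with x hx
          simp only [hx]
          have hp : (0 : ℝ) < 2 ^ N := by positivity
          rw [← le_div_iff₀' hp]
          refine hMB x _ (by positivity) fun i => ?_
          rw [le_div_iff₀' hp]
          exact le_sum_abs_sign_sum (fun i => f i x) i
      _ = ∑ ε, ‖S ε‖ := by
          rw [integral_finsetSum _ fun ε _ => (L1.integrable_coeFn (S ε)).abs]
          simp only [L1.norm_eq_integral_norm, Real.norm_eq_abs]
  let B : (Fin N → ℤˣ) → ℝ := fun ε => ∑ k, |∫ x in Q k, S ε x ∂μ| + N * (δ * η / 2)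
  have hB : ∀ ε, ∀ a b : Fin d → ℝ,
      |∫ x in Set.pi Set.univ (fun i => Set.Ioc (a i) (b i)), S ε x ∂μ| ≤ B ε := by
    intro ε a b
    obtain ⟨k, hk⟩ := hc a b
    set T := Set.pi Set.univ fun i => Set.Ioc (a i) (b i)
    have hT : MeasurableSet T := MeasurableSet.univ_pi fun i => measurableSet_Ioc
    have h1 := abs_setIntegral_sub_le (L1.integrable_coeFn (S ε)) hT (hQ k)
    have h2 : ∫ x in symmDiff T (Q k), |S ε x| ∂μ ≤ N * (δ * η / 2) := by
      calc _ ≤ ∫ x in symmDiff T (Q k), N * W x ∂μ := by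
            refine integral_mono_ae (L1.integrable_coeFn (S ε)).abs.integrableOn
              ((hSi.const_mul _).const_mul _).integrableOn ?_
            refine ae_restrict_of_ae ?_
            filter_upwards [hSx ε] with x hx
            simp only [W, hx]
            rw [mul_inv_cancel_left₀ hN0.ne']
            refine (Finset.abs_sum_le_sum_abs _ _).trans (Finset.sum_le_sum fun i _ => ?_)
            rw [abs_mul]
            rcases Int.units_eq_one_or (ε i) with h | h <;> simp [h]
        _ ≤ _ := by
            rw [integral_const_mul]
            exact mul_le_mul_of_nonneg_left hk hN0.le
    have h3 : |∫ x in Q k, S ε x ∂μ| ≤ ∑ k, |∫ x in Q k, S ε x ∂μ| :=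
      Finset.single_le_sum (f := fun k => |∫ x in Q k, S ε x ∂μ|) (fun k _ => abs_nonneg _)
        (Finset.mem_univ k)
    have h4 := abs_sub_abs_le_abs_sub (∫ x in T, S ε x ∂μ) (∫ x in Q k, S ε x ∂μ)
    simp only [B]
    linarith
  have hup : ∑ ε, B ε < ∑ ε, δ * ‖S ε‖ := by
    have h1 : ∑ ε, B ε ≤ n * (2 ^ N * √N) + 2 ^ N * (N * (δ * η / 2)) := by
      simp only [B]
      rw [Finset.sum_add_distrib, Finset.sum_comm]
      refine add_le_add ?_ (by simp)
      calc _ ≤ ∑ k : Fin n, 2 ^ N * √(N : ℝ) := by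
            refine Finset.sum_le_sum fun k _ => ?_
            simp only [hSQ]
            exact sum_abs_sign_sum_le _ fun i =>
              (abs_setIntegral_le_norm (f i) (Q k)).trans (hf i).2
        _ = _ := by simp
    rw [← Finset.mul_sum]
    have h2 := mul_le_mul_of_nonneg_left hlow hδ.le
    have h3 := mul_lt_mul_of_pos_left hN (show (0 : ℝ) < 2 ^ N by positivity)
    nlinarith
  obtain ⟨ε, -, hε⟩ := Finset.exists_lt_of_sum_lt hup
  exact ⟨S ε, hSZ ε, B ε, hε, hB ε⟩

/-- An infinite-dimensional subspace of `L¹(μ)` contains norm-one functions whose integrals over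
all boxes are uniformly small. -/
theorem exists_unit_small_on_boxes (Z : Submodule ℝ (Lp ℝ 1 μ)) (hZ : ¬ FiniteDimensional ℝ Z)
    (δ : ℝ) (hδ : 0 < δ) :
    ∃ f ∈ Z, ‖f‖ = 1 ∧ ∀ a b : Fin d → ℝ,
      |∫ x in Set.pi Set.univ (fun i => Set.Ioc (a i) (b i)), f x ∂μ| ≤ δ := by
  by_cases hcase : ∃ η : ℝ, 0 < η ∧ ∀ M : (Fin d → ℝ) → ℝ, Integrable M μ → (∀ x, 0 ≤ M x) →
      ∃ f ∈ Z, ‖f‖ ≤ 1 ∧ η ≤ ∫ x, max (|f x| - M x) 0 ∂μ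
  · obtain ⟨η, hη, h⟩ := hcase
    obtain ⟨g, hgZ, B, hB, hg⟩ := exists_small_of_not_dominated Z η hη h δ hδ
    have hB0 : 0 ≤ B := (abs_nonneg _).trans (hg 0 0)
    have hg0 : 0 < ‖g‖ := by
      by_contra hcon
      have : ‖g‖ = 0 := le_antisymm (not_lt.1 hcon) (norm_nonneg _)
      rw [this] at hB
      linarith
    refine ⟨‖g‖⁻¹ • g, Z.smul_mem _ hgZ, ?_, fun a b => ?_⟩
    · rw [norm_smul, norm_inv, norm_norm, inv_mul_cancel₀ hg0.ne']
    · have h1 := map_smul (intL (μ := μ) (Set.pi Set.univ fun i => Set.Ioc (a i) (b i))) ‖g‖⁻¹ g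
      simp only [intL, LinearMap.coe_mk, AddHom.coe_mk, smul_eq_mul] at h1
      rw [h1, abs_mul, abs_inv, abs_norm, inv_mul_le_iff₀ hg0]
      linarith [hg a b]
  · push Not at hcase
    obtain ⟨M, hM, hM0, h⟩ := hcase (δ / 2) (by positivity)
    obtain ⟨f, hf, hf1, hfb⟩ := exists_small_of_dominated Z hZ (δ / 2) (by positivity) M hM hM0
      fun f hf hf1 => (h f hf hf1).le
    exact ⟨f, hf, hf1, fun a b => (hfb a b).trans_eq (by ring)⟩

end core

/-! ### Flat vectors in a reflexive space with a symmetric basis -/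

section basis
variable {X : Type*} [NormedAddCommGroup X] [NormedSpace ℝ X] {e : ℕ → X}

/-- The symmetry of the basis for finite sums: reindexing along an injection (which extends to a
permutation of `ℕ`) and changing signs preserve the norm. -/
theorem IsSymmetricBasis.norm_sum_embedding (he : IsSymmetricBasis e) {m : ℕ} (u : Fin m ↪ ℕ)
    (b ε : Fin m → ℝ) (hε : ∀ i, ε i = 1 ∨ ε i = -1) :
    ‖∑ i, (ε i * b i) • e (u i)‖ = ‖∑ i, b i • e (i : ℕ)‖ := by
  obtain ⟨π, hπ⟩ := MulAction.isMultiplyPretransitive_iff.1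
    (Equiv.Perm.isMultiplyPretransitive ℕ m) Fin.valEmbedding u
  have hπi : ∀ i : Fin m, π i = u i := fun i => by rw [← hπ]; rfl
  let a : ℕ →₀ ℝ := ∑ i : Fin m, Finsupp.single (i : ℕ) (b i)
  let ε' : ℕ → ℝ := fun n => if h : n < m then ε ⟨n, h⟩ else 1
  have h := he.2.2 a π ε' (by
    intro n
    by_cases h : n < m
    · simpa [ε', h] using hε ⟨n, h⟩
    · simp [ε', h])
  have hsum : ∀ g : ℕ → ℝ → X, (∀ n, g n 0 = 0) → (∀ n x y, g n (x + y) = g n x + g n y) →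
      a.sum g = ∑ i : Fin m, g i (b i) := by
    intro g h0 hadd
    rw [← Finsupp.sum_finsetSum_index h0 hadd]
    exact Finset.sum_congr rfl fun i _ => Finsupp.sum_single_index (h0 _)
  rw [hsum _ (by simp) (by intros; rw [mul_add, add_smul]),
    hsum _ (by simp) (by intros; rw [add_smul])] at h
  rw [← h]
  congr 1
  refine Finset.sum_congr rfl fun i _ => ?_
  simp [ε', hπi]

/-- `‖∑ b_i e_i‖ ≥ (∑ |b_i|) ‖e_0 + ⋯ + e_{m-1}‖ / m`, by averaging `∑ |b_i| e_{i+k}` over the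
cyclic shifts `k`. -/
theorem IsSymmetricBasis.average_le (he : IsSymmetricBasis e) {m : ℕ} (b : Fin m → ℝ) :
    (∑ i, |b i|) * ‖∑ i : Fin m, e (i : ℕ)‖ ≤ m * ‖∑ i, b i • e (i : ℕ)‖ := by
  rcases Nat.eq_zero_or_pos m with rfl | hm
  · simp
  have : NeZero m := ⟨hm.ne'⟩
  let ε : Fin m → ℝ := fun i => if 0 ≤ b i then 1 else -1
  have hε : ∀ i, ε i = 1 ∨ ε i = -1 := fun i => by by_cases h : 0 ≤ b i <;> simp [ε, h]
  have hεb : ∀ i, ε i * b i = |b i| := fun i => by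
    by_cases h : 0 ≤ b i
    · simp [ε, h, abs_of_nonneg h]
    · simp [ε, h, abs_of_neg (not_le.1 h)]
  have h1 : ∀ k : Fin m, ‖∑ i, |b i| • e ((k + i : Fin m) : ℕ)‖ = ‖∑ i, b i • e (i : ℕ)‖ := by
    intro k
    have := he.norm_sum_embedding ((Equiv.addLeft k).toEmbedding.trans Fin.valEmbedding) b ε hε
    simpa [hεb] using this
  have h2 : ∑ k : Fin m, ∑ i, |b i| • e ((k + i : Fin m) : ℕ)
      = (∑ i, |b i|) • ∑ i : Fin m, e (i : ℕ) := by
    rw [Finset.sum_comm, Finset.sum_smul]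
    refine Finset.sum_congr rfl fun i _ => ?_
    rw [← Finset.smul_sum]
    congr 1
    exact Equiv.sum_comp (Equiv.addRight i) fun j : Fin m => e (j : ℕ)
  calc (∑ i, |b i|) * ‖∑ i : Fin m, e (i : ℕ)‖
      = ‖∑ k : Fin m, ∑ i, |b i| • e ((k + i : Fin m) : ℕ)‖ := by
        rw [h2, norm_smul, Real.norm_of_nonneg (Finset.sum_nonneg fun i _ => abs_nonneg _)]
    _ ≤ ∑ k : Fin m, ‖∑ i, |b i| • e ((k + i : Fin m) : ℕ)‖ := norm_sum_le _ _
    _ = m * ‖∑ i, b i • e (i : ℕ)‖ := by simp [h1]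

/-- A weak cluster point of a normalized sequence in a reflexive space, described through the
closed convex sets containing a tail of the sequence. It is obtained from Banach–Alaoglu in the
bidual. -/
theorem exists_mem_weak_limit (hrefl : Function.Surjective (NormedSpace.inclusionInDoubleDual ℝ X))
    (hnorm : ∀ n, ‖e n‖ = 1) :
    ∃ x : X, ∀ (m : ℕ) (D : Set X), Convex ℝ D → (∀ n ≥ m, e n ∈ D) → x ∈ closure D := by
  let E : ℕ → WeakDual ℝ (StrongDual ℝ X) := fun n =>
    StrongDual.toWeakDual (NormedSpace.inclusionInDoubleDual ℝ X (e n))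
  let U : Ultrafilter ℕ := Filter.hyperfilter ℕ
  obtain ⟨Λ, -, hΛ⟩ := (WeakDual.isCompact_closedBall (𝕜 := ℝ) (0 : StrongDual ℝ (StrongDual ℝ X))
    1).ultrafilter_le_nhds (U.map E) (by
      rw [Filter.le_principal_iff]
      refine Filter.mem_map.2 (Filter.univ_mem' fun n => ?_)
      simp only [Set.mem_preimage, Metric.mem_closedBall, dist_zero_right]
      exact (NormedSpace.double_dual_bound ℝ X (e n)).trans (hnorm n).le)
  obtain ⟨x, hx⟩ := hrefl (WeakDual.toStrongDual Λ)
  have hlim : ∀ φ : StrongDual ℝ X, Filter.Tendsto (fun n => φ (e n)) U (nhds (φ x)) := by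
    intro φ
    have h1 : Filter.Tendsto E U (nhds Λ) := hΛ
    have h2 := ((WeakDual.eval_continuous φ).tendsto Λ).comp h1
    have h3 : Λ φ = φ x := by
      change (WeakDual.toStrongDual Λ) φ = φ x
      rw [← hx, NormedSpace.dual_def]
    rw [← h3]
    exact h2
  refine ⟨x, fun m D hD hmem => ?_⟩
  by_contra hcon
  obtain ⟨φ, u, hu, hφ⟩ := geometric_hahn_banach_point_closed hD.closure isClosed_closure hcon
  have h1 : ∀ᶠ n in (U : Filter ℕ), u ≤ φ (e n) := by
    have : ∀ᶠ n in (U : Filter ℕ), m ≤ n := by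
      have h := Filter.hyperfilter_le_cofinite (α := ℕ)
      rw [Nat.cofinite_eq_atTop] at h
      exact h (Filter.eventually_ge_atTop m)
    exact this.mono fun n hn => (hφ _ (subset_closure (hmem n hn))).le
  exact absurd (ge_of_tendsto (hlim φ) h1) (not_le.2 hu)

/-- In a reflexive space, `‖e_0 + ⋯ + e_{m-1}‖ / m` takes arbitrarily small values. -/
theorem IsSymmetricBasis.exists_average_small (he : IsSymmetricBasis e)
    (hrefl : Function.Surjective (NormedSpace.inclusionInDoubleDual ℝ X)) (c : ℝ) (hc : 0 < c) :
    ∃ m : ℕ, 0 < m ∧ ‖∑ i : Fin m, e (i : ℕ)‖ < c * m := by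
  by_contra! hcon
  -- the failure gives a lower `ℓ¹`-estimate
  have hl1 : ∀ a : ℕ →₀ ℝ, c * ∑ n ∈ a.support, |a n| ≤ ‖Finsupp.linearCombination ℝ e a‖ := by
    intro a
    obtain ⟨m, hm, hsub⟩ : ∃ m, 0 < m ∧ a.support ⊆ Finset.range m := by
      refine ⟨a.support.sup id + 1, Nat.succ_pos _, fun n hn => Finset.mem_range.2 ?_⟩
      exact Nat.lt_succ_of_le (Finset.le_sup (f := id) hn)
    have h1 := he.average_le fun i : Fin m => a i
    have h2 : ∑ i : Fin m, |a i| = ∑ n ∈ a.support, |a n| := by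
      rw [Fin.sum_univ_eq_sum_range (fun n => |a n|) m]
      exact (Finset.sum_subset hsub fun n _ hn => by simpa using hn).symm
    have h3 : ∑ i : Fin m, a i • e (i : ℕ) = Finsupp.linearCombination ℝ e a := by
      rw [Fin.sum_univ_eq_sum_range (fun n => a n • e n) m, Finsupp.linearCombination_apply,
        Finsupp.sum]
      exact (Finset.sum_subset hsub fun n _ hn => by
        rw [Finsupp.notMem_support_iff.1 hn, zero_smul]).symm
    rw [h2, h3] at h1
    have h4 := mul_le_mul_of_nonneg_left (hcon m hm)
      (Finset.sum_nonneg fun n (_ : n ∈ a.support) => abs_nonneg (a n))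
    have hm' : (0 : ℝ) < m := by exact_mod_cast hm
    refine le_of_mul_le_mul_left ?_ hm'
    linarith
  obtain ⟨x, hx⟩ := exists_mem_weak_limit hrefl he.1
  have hdense : x ∈ closure (Submodule.span ℝ (Set.range e) : Set X) := he.2.1 x
  obtain ⟨y, hy, hxy⟩ := Metric.mem_closure_iff.1 hdense (c / 2) (by positivity)
  obtain ⟨b, rfl⟩ := (Finsupp.mem_span_range_iff_exists_finsupp).1 hy
  obtain ⟨m, hm⟩ : ∃ m, ∀ n ∈ b.support, n < m :=
    ⟨b.support.sup id + 1, fun n hn => Nat.lt_succ_of_le (Finset.le_sup (f := id) hn)⟩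
  -- the sum of the coefficients of index at least `m`
  let σ : (ℕ →₀ ℝ) →ₗ[ℝ] ℝ := Finsupp.linearCombination ℝ fun n => if m ≤ n then 1 else 0
  have hσ : ∀ a : ℕ →₀ ℝ, |σ a| ≤ ∑ n ∈ a.support, |a n| := by
    intro a
    simp only [σ, Finsupp.linearCombination_apply, Finsupp.sum]
    refine (Finset.abs_sum_le_sum_abs _ _).trans (Finset.sum_le_sum fun n _ => ?_)
    split_ifs <;> simp
  let D : Set X := Finsupp.linearCombination ℝ e '' (σ ⁻¹' {1})
  have hD : Convex ℝ D := ((convex_singleton (1 : ℝ)).linear_preimage σ).linear_image _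
  have hxD := hx m D hD fun n hn => ⟨Finsupp.single n 1, by simp [σ, hn], by simp⟩
  obtain ⟨w, ⟨a, ha, rfl⟩, hw⟩ := Metric.mem_closure_iff.1 hxD (c / 2) (by positivity)
  have hσb : σ b = 0 := by
    simp only [σ, Finsupp.linearCombination_apply, Finsupp.sum]
    exact Finset.sum_eq_zero fun n hn => by simp [not_le.2 (hm n hn)]
  have h1 := hl1 (a - b)
  have h2 := hσ (a - b)
  rw [map_sub, hσb, sub_zero, show σ a = 1 from ha, abs_one] at h2
  have h3 : ‖Finsupp.linearCombination ℝ e (a - b)‖ < c := by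
    rw [map_sub, ← dist_eq_norm]
    refine (dist_triangle_left _ _ x).trans_lt ?_
    have hxy' : dist x (Finsupp.linearCombination ℝ e b) < c / 2 := hxy
    linarith
  nlinarith

/-- Vectors with coefficients bounded in `ℓ¹` and small in `ℓ^∞` are small in norm. -/
theorem IsSymmetricBasis.exists_flat_small (he : IsSymmetricBasis e)
    (hrefl : Function.Surjective (NormedSpace.inclusionInDoubleDual ℝ X)) (c : ℝ) (hc : 0 < c) :
    ∃ δ : ℝ, 0 < δ ∧ ∀ (m : ℕ) (a : Fin m → ℝ), ∑ i, |a i| ≤ 1 → (∀ i, |a i| ≤ δ) →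
      ‖∑ i, a i • e (i : ℕ)‖ ≤ c := by
  obtain ⟨n, hn, hnc⟩ := he.exists_average_small hrefl (c / 2) (by positivity)
  have hn' : (0 : ℝ) < n := by exact_mod_cast hn
  refine ⟨c / 2 / n, by positivity, fun m a ha1 haδ => ?_⟩
  obtain ⟨g, hg1, hg⟩ := exists_dual_vector'' ℝ (∑ i, a i • e (i : ℕ))
  have hge : ∀ i, |g (e i)| ≤ 1 := fun i => by
    have := g.le_of_opNorm_le hg1 (e i)
    rwa [he.1 i, one_mul] at this
  -- `S` collects the indices at which the norming functional is not small; it has at most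
  -- `n` elements because `n` of them would carry a signed sum of norm larger than allowed
  let S : Finset (Fin m) := Finset.univ.filter fun i => c / 2 < |g (e i)|
  have hS : S.card ≤ n := by
    by_contra! hcard
    obtain ⟨S', hS', hcard'⟩ := Finset.exists_subset_card_eq hcard.le
    let u : Fin n ↪ ℕ := ((S'.equivFinOfCardEq hcard').symm.toEmbedding.trans
      (Function.Embedding.subtype _)).trans Fin.valEmbedding
    have hu : ∀ i, c / 2 < |g (e (u i))| := fun i => by
      have := hS' ((S'.equivFinOfCardEq hcard').symm i).2
      exact (Finset.mem_filter.1 this).2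
    let ε : Fin n → ℝ := fun i => if 0 ≤ g (e (u i)) then 1 else -1
    have hε : ∀ i, ε i = 1 ∨ ε i = -1 := fun i => by
      by_cases h : 0 ≤ g (e (u i)) <;> simp [ε, h]
    have hεb : ∀ i, ε i * g (e (u i)) = |g (e (u i))| := fun i => by
      by_cases h : 0 ≤ g (e (u i))
      · simp [ε, h, abs_of_nonneg h]
      · simp [ε, h, abs_of_neg (not_le.1 h)]
    have h1 := he.norm_sum_embedding u (fun _ => 1) ε hε
    simp only [mul_one, one_smul] at h1
    have h2 := (le_abs_self _).trans (g.le_of_opNorm_le hg1 (∑ i, ε i • e (u i)))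
    rw [h1, map_sum, one_mul] at h2
    simp only [map_smul, smul_eq_mul, hεb] at h2
    have h3 : (n : ℝ) * (c / 2) ≤ ∑ i, |g (e (u i))| := by
      calc (n : ℝ) * (c / 2) = ∑ i : Fin n, c / 2 := by simp
        _ ≤ _ := Finset.sum_le_sum fun i _ => (hu i).le
    linarith
  have hkey : ∀ i, a i * g (e i) ≤ c / 2 * |a i| + if i ∈ S then c / 2 / n else 0 := by
    intro i
    have h0 : a i * g (e i) ≤ |a i| * |g (e i)| := by
      rw [← abs_mul]; exact le_abs_self _
    split_ifs with h
    · have := mul_le_mul_of_nonneg_left (hge i) (abs_nonneg (a i))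
      have := haδ i
      have := mul_nonneg (half_pos hc).le (abs_nonneg (a i))
      linarith
    · have h1 : |g (e i)| ≤ c / 2 := by simpa [S] using h
      have := mul_le_mul_of_nonneg_left h1 (abs_nonneg (a i))
      linarith
  have hg' : ‖∑ i, a i • e (i : ℕ)‖ = ∑ i, a i * g (e i) := by
    have : g (∑ i, a i • e (i : ℕ)) = ‖∑ i, a i • e (i : ℕ)‖ := hg
    rw [← this]
    simp
  rw [hg']
  calc _ ≤ ∑ i, (c / 2 * |a i| + if i ∈ S then c / 2 / n else 0) :=
        Finset.sum_le_sum fun i _ => hkey i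
    _ = c / 2 * ∑ i, |a i| + S.card * (c / 2 / n) := by
        rw [Finset.sum_add_distrib, ← Finset.mul_sum, Finset.sum_ite_mem]
        simp
    _ ≤ c / 2 * 1 + n * (c / 2 / n) := by
        gcongr
    _ = c := by field_simp; ring

end basis

/-! ### Strict singularity -/

theorem sum_abs_setIntegral_le {α : Type*} [MeasurableSpace α] {μ : Measure α} {f : α → ℝ}
    (hf : Integrable f μ) {m : ℕ} {T : Fin m → Set α} (hT : ∀ j, MeasurableSet (T j))
    (hd : Pairwise fun i j => Disjoint (T i) (T j)) :
    ∑ j, |∫ x in T j, f x ∂μ| ≤ ∫ x, |f x| ∂μ := by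
  calc ∑ j, |∫ x in T j, f x ∂μ| ≤ ∑ j, ∫ x in T j, |f x| ∂μ :=
        Finset.sum_le_sum fun j _ => abs_integral_le_integral_abs
    _ = ∫ x in ⋃ j, T j, |f x| ∂μ :=
        (integral_iUnion_fintype hT hd fun j => hf.abs.integrableOn).symm
    _ ≤ _ := setIntegral_le_integral hf.abs (Filter.Eventually.of_forall fun x => abs_nonneg _)

theorem JFNorm_nonneg {X : Type*} [NormedAddCommGroup X] [NormedSpace ℝ X] {d : ℕ}
    (e : ℕ → X) (Ω : Set (Fin d → ℝ)) (f : (Fin d → ℝ) → ℝ) : 0 ≤ JFNorm e Ω f := by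
  refine Real.sSup_nonneg ?_
  rintro r ⟨m, T, -, -, rfl⟩
  exact norm_nonneg _

/-- For `d ≥ 1`, `Ω` a bounded open subset of `ℝ^d` and `X` a reflexive
real Banach space with a normalized 1-symmetric basis, the formal identity
`I : L¹(Ω) → JF_X(Ω)` is strictly singular: on every infinite-dimensional closed
subspace `Z` of `L¹(Ω)`, the infimum of the `JF_X(Ω)` norm over the `L¹`-unit sphere of
`Z` is `0`, i.e. the two norms are not equivalent on `Z`. -/
theorem identity_L1_to_JFX_strictly_singular {d : ℕ} (hd : 1 ≤ d)
    (Ω : Set (Fin d → ℝ)) (hΩo : IsOpen Ω) (hΩb : Bornology.IsBounded Ω)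
    {X : Type*} [NormedAddCommGroup X] [NormedSpace ℝ X] [CompleteSpace X]
    (hrefl : Function.Surjective (NormedSpace.inclusionInDoubleDual ℝ X))
    (e : ℕ → X) (he : IsSymmetricBasis e)
    (Z : Submodule ℝ (Lp ℝ 1 (volume.restrict Ω)))
    (hZclosed : IsClosed (Z : Set (Lp ℝ 1 (volume.restrict Ω))))
    (hZinf : ¬ FiniteDimensional ℝ Z) :
    sInf { r : ℝ | ∃ f : Lp ℝ 1 (volume.restrict Ω),
        f ∈ Z ∧ ‖f‖ = 1 ∧ r = JFNorm e Ω f } = 0 := by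
  refine le_antisymm (le_of_forall_pos_le_add fun c hc => ?_) ?_
  · rw [zero_add]
    obtain ⟨δ, hδ, hflat⟩ := he.exists_flat_small hrefl c hc
    obtain ⟨f, hfZ, hf1, hfT⟩ := exists_unit_small_on_boxes Z hZinf δ hδ
    have hbdd : BddBelow { r : ℝ | ∃ f : Lp ℝ 1 (volume.restrict Ω),
        f ∈ Z ∧ ‖f‖ = 1 ∧ r = JFNorm e Ω f } := by
      refine ⟨0, ?_⟩
      rintro r ⟨g, -, -, rfl⟩
      exact JFNorm_nonneg e Ω g
    refine (csInf_le hbdd ⟨f, hfZ, hf1, rfl⟩).trans (Real.sSup_le ?_ hc.le)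
    · rintro r ⟨m, T, hT, hdis, rfl⟩
      have hint : ∀ j, ∫ x in T j, f x = ∫ x in T j, f x ∂(volume.restrict Ω) := fun j => by
        rw [Measure.restrict_restrict_of_subset (hT j).2]
      have hmeas : ∀ j, MeasurableSet (T j) := fun j => by
        obtain ⟨a, b, -, h⟩ := (hT j).1
        rw [h]
        exact MeasurableSet.univ_pi fun i => measurableSet_Ioo
      simp only [hint]
      refine hflat m _ ?_ fun j => ?_
      · refine (sum_abs_setIntegral_le (L1.integrable_coeFn f) hmeas hdis).trans ?_
        rw [L1.norm_eq_integral_norm] at hf1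
        exact hf1.le
      · obtain ⟨a, b, -, h⟩ := (hT j).1
        have hae : T j =ᵐ[volume.restrict Ω] Set.pi Set.univ fun i => Set.Ioc (a i) (b i) := by
          rw [h]
          exact ae_restrict_of_ae
            (Measure.univ_pi_Ioo_ae_eq_Icc.trans Measure.univ_pi_Ioc_ae_eq_Icc.symm)
        rw [setIntegral_congr_set hae]
        exact hfT a b
  · refine Real.sInf_nonneg ?_
    rintro r ⟨g, -, -, rfl⟩
    exact JFNorm_nonneg e Ω g

end
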